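/- For q ≥ 2, the orthogonal complement V^⊥_{adj} of V_{adj} inside V_{A} is invariant under φ⊗², and the subspaces V_[A] and V^⊥_{adj} carry equivalent subrepresentations of φ⊗², i.e. there is a linear isomorphism T: V_[A] → V^⊥_{adj} with T(φ⊗²(U)x) = φ⊗²(U)(Tx) for all U ∈ 𝒩_q and x ∈ V_[A]. -/

import Mathlib

open Matrix MeasureTheory
open scoped Kronecker

noncomputable section

namespace CliffordPaper

/-- The single-qubit Pauli matrices `1, X, Y, Z`. -/
def pauli1 : Fin 4 → Matrix (Fin 2) (Fin 2) ℂ :=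
  ![1, !![0, 1; 1, 0], !![0, -Complex.I; Complex.I, 0], !![1, 0; 0, -1]]

/-- Index type for the computational basis of `q` qubits. -/
abbrev Idx (q : ℕ) := Fin q → Fin 2

/-- The space `M_d` of `d × d` complex matrices, `d = 2^q`. -/
abbrev Mat (q : ℕ) := Matrix (Idx q) (Idx q) ℂ

/-- The space `M_d ⊗ M_d`, realized as matrices indexed by the product index set
(the tensor factors combine via the Kronecker product `⊗ₖ`). -/
abbrev BMat (q : ℕ) := Matrix (Idx q × Idx q) (Idx q × Idx q) ℂ

/-- The `q`-fold Kronecker product of single-qubit Paulis with labels `a`. -/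
def PauliOp {q : ℕ} (a : Fin q → Fin 4) : Mat q :=
  Matrix.of fun x y => ∏ i, pauli1 (a i) (x i) (y i)

/-- `√d` as a complex number, where `d = 2^q`. -/
def sqrtd (q : ℕ) : ℂ := (Real.sqrt (2 ^ q) : ℝ)

/-- The set `σ̂_q` of normalized Pauli operators. -/
def sigmaHat (q : ℕ) : Set (Mat q) :=
  {M | ∃ a : Fin q → Fin 4, M = (sqrtd q)⁻¹ • PauliOp a}

/-- The normalized identity `σ₀ = 1/√d`. -/
def sigma0 (q : ℕ) : Mat q := (sqrtd q)⁻¹ • (1 : Mat q)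

/-- `σ_q = σ̂_q \ {σ₀}`. -/
def sigmaSet (q : ℕ) : Set (Mat q) := sigmaHat q \ {sigma0 q}

/-- `N_τ`: the normalized nonidentity Paulis anticommuting with `τ`. -/
def NSet {q : ℕ} (τ : Mat q) : Set (Mat q) :=
  {σ | σ ∈ sigmaSet q ∧ σ * τ + τ * σ = 0}

/-- `C_τ`: the normalized nonidentity Paulis distinct from `τ` commuting with `τ`. -/
def CSet {q : ℕ} (τ : Mat q) : Set (Mat q) :=
  {σ | σ ∈ sigmaSet q ∧ σ ≠ τ ∧ σ * τ = τ * σ}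

/-- `Ĉ_τ`: the normalized Paulis commuting with `τ`. -/
def CHatSet {q : ℕ} (τ : Mat q) : Set (Mat q) :=
  {σ | σ ∈ sigmaHat q ∧ σ * τ = τ * σ}

/-- The normalized product `σ·τ = √d στ`. -/
def nprod {q : ℕ} (σ τ : Mat q) : Mat q := sqrtd q • (σ * τ)

/-- The Clifford normalizer `𝒩_q`: unitaries mapping normalized Paulis to
signed normalized Paulis under conjugation. -/
def Cliff (q : ℕ) : Set (Mat q) :=
  {U | U ∈ Matrix.unitaryGroup (Idx q) ℂ ∧
    ∀ σ ∈ sigmaHat q, ∃ τ ∈ sigmaHat q, U * σ * Uᴴ = τ ∨ U * σ * Uᴴ = -τ}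

/-- The two-copy representation `φ⊗²(U) : A ⊗ B ↦ (UAU†) ⊗ (UBU†)`, extended linearly. -/
def twoCopy {q : ℕ} (U : Mat q) : BMat q →ₗ[ℂ] BMat q where
  toFun M := (U ⊗ₖ U) * M * (U ⊗ₖ U)ᴴ
  map_add' M N := by
    show (U ⊗ₖ U) * (M + N) * (U ⊗ₖ U)ᴴ = (U ⊗ₖ U) * M * (U ⊗ₖ U)ᴴ + (U ⊗ₖ U) * N * (U ⊗ₖ U)ᴴ
    rw [Matrix.mul_add, Matrix.add_mul]
  map_smul' c M := by
    show (U ⊗ₖ U) * (c • M) * (U ⊗ₖ U)ᴴ = c • ((U ⊗ₖ U) * M * (U ⊗ₖ U)ᴴ)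
    rw [Matrix.mul_smul, Matrix.smul_mul]

/-- The Hilbert–Schmidt inner product `⟨A, B⟩ = tr(A† B)`. -/
def hs {q : ℕ} (A B : BMat q) : ℂ := (Aᴴ * B).trace

/-- A subspace is invariant under the two-copy representation of `𝒩_q`. -/
def IsInvariant (q : ℕ) (W : Submodule ℂ (BMat q)) : Prop :=
  ∀ U ∈ Cliff q, ∀ v ∈ W, twoCopy U v ∈ W

/-- A nonzero invariant subspace carries an irreducible subrepresentation. -/
def CarriesIrred (q : ℕ) (W : Submodule ℂ (BMat q)) : Prop :=
  W ≠ ⊥ ∧ IsInvariant q W ∧ ∀ W' ≤ W, IsInvariant q W' → W' = ⊥ ∨ W' = W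

/-- Two invariant subspaces carry equivalent subrepresentations: there is a linear
isomorphism between them intertwining the two-copy representation. -/
def EquivRep (q : ℕ) (W W' : Submodule ℂ (BMat q)) : Prop :=
  ∃ T : BMat q →ₗ[ℂ] BMat q, Submodule.map T W = W' ∧
    (∀ x ∈ W, T x = 0 → x = 0) ∧
    ∀ U ∈ Cliff q, ∀ x ∈ W, T (twoCopy U x) = twoCopy U (T x)

/-- `S_{σ,τ} = (σ⊗τ + τ⊗σ)/√2`. -/
def SVec {q : ℕ} (σ τ : Mat q) : BMat q :=
  ((Real.sqrt 2 : ℂ))⁻¹ • (σ ⊗ₖ τ + τ ⊗ₖ σ)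

/-- `A_{σ,τ} = (σ⊗τ − τ⊗σ)/√2`. -/
def AVec {q : ℕ} (σ τ : Mat q) : BMat q :=
  ((Real.sqrt 2 : ℂ))⁻¹ • (σ ⊗ₖ τ - τ ⊗ₖ σ)

/-- The trivial sector `V_id`. -/
def Vid (q : ℕ) : Submodule ℂ (BMat q) :=
  Submodule.span ℂ {sigma0 q ⊗ₖ sigma0 q}

/-- The right adjoint sector `V_r`. -/
def Vr (q : ℕ) : Submodule ℂ (BMat q) :=
  Submodule.span ℂ {M | ∃ τ ∈ sigmaSet q, M = sigma0 q ⊗ₖ τ}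

/-- The left adjoint sector `V_l`. -/
def Vl (q : ℕ) : Submodule ℂ (BMat q) :=
  Submodule.span ℂ {M | ∃ τ ∈ sigmaSet q, M = τ ⊗ₖ sigma0 q}

/-- The diagonal sector `V_d`. -/
def Vdiag (q : ℕ) : Submodule ℂ (BMat q) :=
  Submodule.span ℂ {M | ∃ τ ∈ sigmaSet q, M = τ ⊗ₖ τ}

/-- The symmetric commuting sector `V_[S]`. -/
def VScom (q : ℕ) : Submodule ℂ (BMat q) :=
  Submodule.span ℂ {M | ∃ τ ∈ sigmaSet q, ∃ σ ∈ CSet τ, M = SVec σ τ}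

/-- The symmetric anti-commuting sector `V_{S}`. -/
def VSanti (q : ℕ) : Submodule ℂ (BMat q) :=
  Submodule.span ℂ {M | ∃ τ ∈ sigmaSet q, ∃ σ ∈ NSet τ, M = SVec σ τ}

/-- The antisymmetric commuting sector `V_[A]`. -/
def VAcom (q : ℕ) : Submodule ℂ (BMat q) :=
  Submodule.span ℂ {M | ∃ τ ∈ sigmaSet q, ∃ σ ∈ CSet τ, M = AVec σ τ}

/-- The antisymmetric anti-commuting sector `V_{A}`. -/
def VAanti (q : ℕ) : Submodule ℂ (BMat q) :=
  Submodule.span ℂ {M | ∃ τ ∈ sigmaSet q, ∃ σ ∈ NSet τ, M = AVec σ τ}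

/-- `V_[A]` presented with the spanning vectors `A_{σ,σ·τ}`, `σ ∈ C_τ`. -/
def VAcom' (q : ℕ) : Submodule ℂ (BMat q) :=
  Submodule.span ℂ {M | ∃ τ ∈ sigmaSet q, ∃ σ ∈ CSet τ, M = AVec σ (nprod σ τ)}

/-- `V_0 = span{Σ_{σ∈σ_q} σ⊗σ}`. -/
def V0diag (q : ℕ) : Submodule ℂ (BMat q) :=
  Submodule.span ℂ {∑ᶠ σ ∈ sigmaSet q, σ ⊗ₖ σ}

/-- `V_1`, the "positive" part of the diagonal sector. -/
def V1diag (q : ℕ) : Submodule ℂ (BMat q) :=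
  Submodule.span ℂ {v | ∃ lam : Mat q → ℂ,
    v = ∑ᶠ σ ∈ sigmaSet q, lam σ • (σ ⊗ₖ σ) ∧
    (∑ᶠ σ ∈ sigmaSet q, lam σ) = 0 ∧
    ∀ τ ∈ sigmaSet q, (∑ᶠ σ ∈ NSet τ, lam σ) = -((2 ^ q : ℂ) / 2) * lam τ}

/-- `V_2`, the "negative" part of the diagonal sector. -/
def V2diag (q : ℕ) : Submodule ℂ (BMat q) :=
  Submodule.span ℂ {v | ∃ lam : Mat q → ℂ,
    v = ∑ᶠ σ ∈ sigmaSet q, lam σ • (σ ⊗ₖ σ) ∧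
    (∑ᶠ σ ∈ sigmaSet q, lam σ) = 0 ∧
    ∀ τ ∈ sigmaSet q, (∑ᶠ σ ∈ NSet τ, lam σ) = ((2 ^ q : ℂ) / 2) * lam τ}

/-- `v^[adj]_τ = (2|C_τ|)^{-1/2} Σ_{σ∈C_τ} S_{σ,σ·τ}`. -/
def vadjS {q : ℕ} (τ : Mat q) : BMat q :=
  ((Real.sqrt (2 * ((CSet τ).ncard : ℝ)) : ℂ))⁻¹ • ∑ᶠ σ ∈ CSet τ, SVec σ (nprod σ τ)

/-- `v^{adj}_τ = (2|N_τ|)^{-1/2} Σ_{σ∈N_τ} A_{σ,iσ·τ}`. -/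
def vadjA {q : ℕ} (τ : Mat q) : BMat q :=
  ((Real.sqrt (2 * ((NSet τ).ncard : ℝ)) : ℂ))⁻¹ •
    ∑ᶠ σ ∈ NSet τ, AVec σ (Complex.I • nprod σ τ)

/-- The symmetric adjoint sector `V_[adj]`. -/
def VadjS (q : ℕ) : Submodule ℂ (BMat q) :=
  Submodule.span ℂ {M | ∃ τ ∈ sigmaSet q, M = vadjS τ}

/-- The antisymmetric adjoint sector `V_{adj}`. -/
def VadjA (q : ℕ) : Submodule ℂ (BMat q) :=
  Submodule.span ℂ {M | ∃ τ ∈ sigmaSet q, M = vadjA τ}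

/-- The orthogonal complement `V^⊥_{adj}` of `V_{adj}` inside `V_{A}`. -/
def VadjAperp (q : ℕ) : Submodule ℂ (BMat q) :=
  Submodule.span ℂ {v | v ∈ VAanti q ∧ ∀ w ∈ VadjA q, hs w v = 0}

/-- `V_{1}^τ`. -/
def V1symτ (q : ℕ) (τ : Mat q) : Submodule ℂ (BMat q) :=
  Submodule.span ℂ {v | ∃ lam : Mat q → ℂ,
    v = ∑ᶠ σ ∈ NSet τ, lam σ • SVec σ (Complex.I • nprod σ τ) ∧
    ∀ ν ∈ NSet τ, (∑ᶠ σ ∈ NSet τ ∩ CSet ν, lam σ) - (∑ᶠ σ ∈ NSet τ ∩ NSet ν, lam σ)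
      = ((2 ^ q : ℂ) / 2) * lam ν}

/-- `V_{2}^τ`. -/
def V2symτ (q : ℕ) (τ : Mat q) : Submodule ℂ (BMat q) :=
  Submodule.span ℂ {v | ∃ lam : Mat q → ℂ,
    v = ∑ᶠ σ ∈ NSet τ, lam σ • SVec σ (Complex.I • nprod σ τ) ∧
    ∀ ν ∈ NSet τ, (∑ᶠ σ ∈ NSet τ ∩ CSet ν, lam σ) - (∑ᶠ σ ∈ NSet τ ∩ NSet ν, lam σ)
      = -((2 ^ q : ℂ) / 2) * lam ν}

/-- `V_{1} = ⊕_τ V_{1}^τ`. -/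
def V1sym (q : ℕ) : Submodule ℂ (BMat q) := ⨆ τ ∈ sigmaSet q, V1symτ q τ

/-- `V_{2} = ⊕_τ V_{2}^τ`. -/
def V2sym (q : ℕ) : Submodule ℂ (BMat q) := ⨆ τ ∈ sigmaSet q, V2symτ q τ

/-- The defining property of the map `Θ` on `V_[A]`. -/
def ThetaProp (q : ℕ) (Θ : BMat q →ₗ[ℂ] BMat q) : Prop :=
  ∀ τ ∈ sigmaSet q, ∀ σ ∈ CSet τ,
    Θ (AVec σ (nprod σ τ)) =
      (∑ᶠ σ' ∈ NSet τ ∩ CSet σ, AVec σ' (Complex.I • nprod σ' τ)) -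
      ∑ᶠ σ' ∈ NSet τ ∩ NSet σ, AVec σ' (Complex.I • nprod σ' τ)

/-- `V` = span of off-diagonal products `σ⊗σ̂`, `σ ≠ σ̂`. -/
def Voff (q : ℕ) : Submodule ℂ (BMat q) :=
  Submodule.span ℂ {M | ∃ σ ∈ sigmaSet q, ∃ σ' ∈ sigmaSet q, σ ≠ σ' ∧ M = σ ⊗ₖ σ'}

/-- `V^τ` = span of the `σ⊗σ̂` with `σ·σ̂ ∈ {τ, −τ, iτ, −iτ}`. -/
def Vtau (q : ℕ) (τ : Mat q) : Submodule ℂ (BMat q) :=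
  Submodule.span ℂ {M | ∃ σ ∈ sigmaSet q, ∃ σ' ∈ sigmaSet q,
    (nprod σ σ' = τ ∨ nprod σ σ' = -τ ∨ nprod σ σ' = Complex.I • τ ∨
      nprod σ σ' = -(Complex.I • τ)) ∧ M = σ ⊗ₖ σ'}


/-! ### Pauli algebra -/

/-- labels -/
abbrev Lb (q : ℕ) := Fin q → Fin 4

/-- single qubit phase -/
def ph4 (a b : Fin 4) : ℂ :=
  if a = 0 ∨ b = 0 ∨ a = b then 1 else
  if (a = 1 ∧ b = 2) ∨ (a = 2 ∧ b = 3) ∨ (a = 3 ∧ b = 1) then Complex.I else -Complex.I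

/-- single qubit commutation sign -/
def chi4 (a b : Fin 4) : ℂ := if a = 0 ∨ b = 0 ∨ a = b then 1 else -1

/-- label product -/
def xr {q : ℕ} (a b : Lb q) : Lb q := fun i => a i ^^^ b i

/-- phase -/
def om {q : ℕ} (a b : Lb q) : ℂ := ∏ i, ph4 (a i) (b i)

/-- commutation sign -/
def chi {q : ℕ} (a b : Lb q) : ℂ := ∏ i, chi4 (a i) (b i)

lemma pauli1_mul (a b : Fin 4) : pauli1 a * pauli1 b = ph4 a b • pauli1 (a ^^^ b) := by
  fin_cases a <;> fin_cases b <;> ext i j <;> fin_cases i <;> fin_cases j <;>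
    simp [pauli1, ph4, Matrix.mul_apply, Fin.sum_univ_two]

lemma pauli1_herm (a : Fin 4) : (pauli1 a)ᴴ = pauli1 a := by
  fin_cases a <;> ext i j <;> fin_cases i <;> fin_cases j <;> simp [pauli1]

lemma pauli1_trace (a : Fin 4) : (pauli1 a).trace = if a = 0 then 2 else 0 := by
  fin_cases a <;> simp [pauli1, Matrix.trace_fin_two]

lemma ph4_sq (a b : Fin 4) : ph4 a b ^ 2 = chi4 a b := by
  unfold ph4 chi4
  split_ifs <;> simp

lemma chi4_comm (a b : Fin 4) : chi4 a b = chi4 b a := by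
  unfold chi4
  congr 1
  grind

lemma chi4_xor (a b c : Fin 4) : chi4 (a ^^^ b) c = chi4 a c * chi4 b c := by
  fin_cases a <;> fin_cases b <;> fin_cases c <;> simp [chi4]

lemma chi4_sum (a : Fin 4) : ∑ b, chi4 a b = if a = 0 then 4 else 0 := by
  fin_cases a <;> simp [chi4, Fin.sum_univ_four]

lemma ph4_self (a : Fin 4) : ph4 a a = 1 := by simp [ph4]

lemma ph4_mul_rev (a b : Fin 4) : ph4 a b * ph4 b a = 1 := by
  fin_cases a <;> fin_cases b <;> simp [ph4]

section aux

variable {q : ℕ}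

lemma P_mul (a b : Lb q) : PauliOp a * PauliOp b = om a b • PauliOp (xr a b) := by
  ext x y
  simp only [PauliOp, Matrix.mul_apply, Matrix.of_apply, Matrix.smul_apply, smul_eq_mul, om,
    ← Finset.prod_mul_distrib, xr]
  have h : ∀ i, ph4 (a i) (b i) * pauli1 (a i ^^^ b i) (x i) (y i)
      = ∑ j, pauli1 (a i) (x i) j * pauli1 (b i) j (y i) := by
    intro i
    rw [← Matrix.mul_apply, pauli1_mul]; rfl
  simp only [h, Finset.prod_univ_sum, Fintype.piFinset_univ]

lemma P_herm (a : Lb q) : (PauliOp a)ᴴ = PauliOp a := by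
  ext x y
  simp only [PauliOp, Matrix.conjTranspose_apply, Matrix.of_apply, star_prod]
  refine Finset.prod_congr rfl fun i _ => ?_
  conv_rhs => rw [← pauli1_herm]
  rfl

lemma P_zero : PauliOp (0 : Lb q) = 1 := by
  ext x y
  simp only [PauliOp, Matrix.of_apply, Pi.zero_apply, pauli1, Matrix.cons_val_zero,
    Matrix.one_apply]
  by_cases h : x = y
  · simp [h]
  · rw [if_neg h]
    obtain ⟨i, hi⟩ := Function.ne_iff.mp h
    exact Finset.prod_eq_zero (Finset.mem_univ i) (if_neg hi)

lemma P_trace (a : Lb q) : (PauliOp a).trace = if a = 0 then 2 ^ q else 0 := by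
  have : (PauliOp a).trace = ∏ i, (pauli1 (a i)).trace := by
    simp only [Matrix.trace, Matrix.diag_apply, PauliOp, Matrix.of_apply, Finset.prod_univ_sum,
      Fintype.piFinset_univ]
  rw [this]
  simp only [pauli1_trace]
  by_cases h : a = 0
  · simp [h]
  · rw [if_neg h]
    obtain ⟨i, hi⟩ := Function.ne_iff.mp h
    exact Finset.prod_eq_zero (Finset.mem_univ i) (if_neg hi)

lemma om_sq (a b : Lb q) : om a b ^ 2 = chi a b := by
  simp only [om, chi, ← Finset.prod_pow, ph4_sq]

lemma chi_comm (a b : Lb q) : chi a b = chi b a :=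
  Finset.prod_congr rfl fun i _ => chi4_comm _ _

lemma chi_xr (a b c : Lb q) : chi (xr a b) c = chi a c * chi b c := by
  simp only [chi, xr, chi4_xor, Finset.prod_mul_distrib]

lemma chi_xr' (a b c : Lb q) : chi c (xr a b) = chi c a * chi c b := by
  rw [chi_comm, chi_xr, chi_comm a, chi_comm b]

lemma chi_sum (a : Lb q) : ∑ b, chi a b = if a = 0 then 4 ^ q else 0 := by
  have : ∑ b, chi a b = ∏ i, ∑ j, chi4 (a i) j := by
    simp only [chi, Finset.prod_univ_sum, Fintype.piFinset_univ]
  rw [this]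
  simp only [chi4_sum]
  by_cases h : a = 0
  · simp [h]
  · rw [if_neg h]
    obtain ⟨i, hi⟩ := Function.ne_iff.mp h
    exact Finset.prod_eq_zero (Finset.mem_univ i) (if_neg hi)

lemma chi_self (a : Lb q) : chi a a = 1 := by simp [chi, chi4]

lemma chi_zero (a : Lb q) : chi 0 a = 1 := by simp [chi, chi4]

lemma chi_pm (a b : Lb q) : chi a b = 1 ∨ chi a b = -1 := by
  unfold chi
  refine Finset.prod_induction _ (fun z : ℂ => z = 1 ∨ z = -1) ?_ (Or.inl rfl) ?_
  · rintro x y (rfl | rfl) (rfl | rfl) <;> simp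
  · intro i _
    unfold chi4
    split_ifs <;> simp

lemma chi_sq (a b : Lb q) : chi a b * chi a b = 1 := by
  rcases chi_pm a b with h | h <;> simp [h]

lemma om_ne (a b : Lb q) : om a b ≠ 0 := by
  intro h
  have := om_sq a b
  rcases chi_pm a b with h' | h' <;> simp [h, h'] at this

lemma om_self (a : Lb q) : om a a = 1 := by simp [om, ph4_self]

lemma xor_xor4 (a b : Fin 4) : (a ^^^ b) ^^^ b = a := by
  revert a b; decide

lemma xor_comm4 (a b : Fin 4) : a ^^^ b = b ^^^ a := by
  revert a b; decide

lemma xor_zero4 (a b : Fin 4) : a ^^^ b = 0 ↔ a = b := by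
  revert a b; decide

lemma xr_xr (a b : Lb q) : xr (xr a b) b = a := by
  funext i; exact xor_xor4 _ _

lemma xr_comm (a b : Lb q) : xr a b = xr b a := by
  funext i; exact xor_comm4 _ _

lemma xr_eq_zero (a b : Lb q) : xr a b = 0 ↔ a = b := by
  constructor
  · intro h; funext i
    exact (xor_zero4 _ _).1 (congrFun h i)
  · intro h; funext i
    exact (xor_zero4 _ _).2 (congrFun h i)

lemma P_sq (a : Lb q) : PauliOp a * PauliOp a = 1 := by
  rw [P_mul, om_self, (xr_eq_zero a a).2 rfl, P_zero, one_smul]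

lemma P_ne (a : Lb q) : PauliOp a ≠ 0 := by
  intro h
  have := P_sq a
  rw [h, mul_zero] at this
  exact zero_ne_one this

lemma om_mul_rev (a b : Lb q) : om a b * om b a = 1 := by
  simp only [om, ← Finset.prod_mul_distrib, ph4_mul_rev, Finset.prod_const_one]

lemma P_comm (a b : Lb q) : PauliOp a * PauliOp b = chi a b • (PauliOp b * PauliOp a) := by
  rw [P_mul, P_mul, smul_smul, xr_comm b a, ← om_sq, sq, mul_assoc, om_mul_rev, mul_one]

lemma P_trace_mul (a b : Lb q) :
    (PauliOp a * PauliOp b).trace = if a = b then 2 ^ q else 0 := by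
  rw [P_mul, Matrix.trace_smul, P_trace]
  by_cases h : a = b
  · subst h
    simp [(xr_eq_zero a a).2 rfl, om_self]
  · rw [if_neg h, if_neg (fun h' => h ((xr_eq_zero a b).1 h')), smul_zero]

lemma P_inj : Function.Injective (PauliOp : Lb q → Mat q) := by
  intro a b h
  by_contra hab
  have := P_trace_mul a b
  rw [if_neg hab, ← h, P_trace_mul, if_pos rfl] at this
  simp at this

lemma P_neg_ne (a b : Lb q) : PauliOp a ≠ - PauliOp b := by
  intro h
  have h1 := P_trace_mul a b
  have h2 : PauliOp b = - PauliOp a := by rw [h, neg_neg]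
  rw [h2, mul_neg, Matrix.trace_neg, P_trace_mul, if_pos rfl] at h1
  split_ifs at h1
  · have h3 : (2 : ℂ) * 2 ^ q = 0 := by linear_combination -h1
    simp at h3
  · simp at h1

/-! ### The basis `LV` and the linear operators -/

/-- basis vectors -/
def LV (σ τ : Lb q) : BMat q := PauliOp σ ⊗ₖ (PauliOp σ * PauliOp τ)

/-- unnormalized antisymmetric vectors -/
def EV (σ τ : Lb q) : BMat q :=
  PauliOp σ ⊗ₖ (PauliOp σ * PauliOp τ) - (PauliOp σ * PauliOp τ) ⊗ₖ PauliOp σ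

lemma P_xr (σ τ : Lb q) : PauliOp (xr σ τ) = (om σ τ)⁻¹ • (PauliOp σ * PauliOp τ) := by
  rw [P_mul, smul_smul, inv_mul_cancel₀ (om_ne _ _), one_smul]

lemma om_inv_sq (σ τ : Lb q) : chi σ τ * ((om σ τ)⁻¹ * (om σ τ)⁻¹) = 1 := by
  rw [← om_sq]
  have := om_ne σ τ
  field_simp

lemma EV_eq (σ τ : Lb q) : EV σ τ = LV σ τ - chi σ τ • LV (xr σ τ) τ := by
  unfold EV LV
  congr 1
  rw [P_xr, Matrix.smul_mul, mul_assoc, P_sq, mul_one, Matrix.smul_kronecker,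
    Matrix.kronecker_smul, smul_smul, smul_smul, mul_assoc, om_inv_sq, one_smul]

lemma hs_LV (a b c d : Lb q) :
    hs (LV a b) (LV c d) = if a = c ∧ b = d then 4 ^ q else 0 := by
  unfold hs LV
  rw [Matrix.conjTranspose_kronecker, ← Matrix.mul_kronecker_mul, Matrix.trace_kronecker,
    P_herm, Matrix.conjTranspose_mul, P_herm, P_herm, P_trace_mul]
  by_cases h : a = c
  · subst h
    rw [mul_assoc, ← mul_assoc (PauliOp a), P_sq, one_mul, P_trace_mul]
    by_cases h2 : b = d
    · simp only [h2, if_true, and_self]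
      rw [← mul_pow]; norm_num
    · simp [h2]
  · simp [h]

/-- the Hilbert-Schmidt functional -/
def hsL (w : BMat q) : BMat q →ₗ[ℂ] ℂ where
  toFun v := hs w v
  map_add' x y := by simp [hs, Matrix.mul_add, Matrix.trace_add]
  map_smul' c x := by simp [hs, Matrix.trace_smul]

lemma hsL_apply (w v : BMat q) : hsL w v = hs w v := rfl

lemma hs_star (v w : BMat q) : hs w v = star (hs v w) := by
  unfold hs
  rw [← Matrix.trace_conjTranspose, Matrix.conjTranspose_mul, Matrix.conjTranspose_conjTranspose]

/-- operator with kernel `f` -/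
def MM (f : Lb q → Lb q → Lb q → ℂ) : BMat q →ₗ[ℂ] BMat q :=
  ∑ σ, ∑ τ, (hsL (LV σ τ)).smulRight (∑ ν, f σ τ ν • LV ν τ)

lemma MM_apply (f : Lb q → Lb q → Lb q → ℂ) (M : BMat q) :
    MM f M = ∑ σ, ∑ τ, hs (LV σ τ) M • ∑ ν, f σ τ ν • LV ν τ := by
  simp [MM, LinearMap.sum_apply, hsL_apply]

lemma MM_LV (f : Lb q → Lb q → Lb q → ℂ) (σ τ : Lb q) :
    MM f (LV σ τ) = (4 ^ q : ℂ) • ∑ ν, f σ τ ν • LV ν τ := by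
  rw [MM_apply, Finset.sum_eq_single σ, Finset.sum_eq_single τ]
  · rw [hs_LV]; simp
  · intro b _ hb; rw [hs_LV]; simp [hb]
  · simp
  · intro b _ hb
    refine Finset.sum_eq_zero fun c _ => ?_
    rw [hs_LV]; simp [hb]
  · simp

/-- kernel of T -/
def fT (σ τ ν : Lb q) : ℂ := (1 - chi ν τ) * chi σ ν

/-- kernel of S -/
def fS (σ τ ν : Lb q) : ℂ := (1 + chi ν τ) * chi σ ν

/-- image vectors -/
def KV (σ τ : Lb q) : BMat q := ∑ ν, fT σ τ ν • LV ν τ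

lemma T_EV (σ τ : Lb q) (h : chi σ τ = 1) : MM fT (EV σ τ) = (2 * 4 ^ q : ℂ) • KV σ τ := by
  rw [EV_eq, h, one_smul, map_sub, MM_LV, MM_LV, ← smul_sub, ← Finset.sum_sub_distrib,
    mul_comm, mul_smul]
  congr 1
  rw [KV, Finset.smul_sum]
  refine Finset.sum_congr rfl fun ν _ => ?_
  rw [← sub_smul, smul_smul]
  congr 1
  simp only [fT, chi_xr]
  rw [chi_comm τ ν]
  have := chi_sq ν τ
  linear_combination (chi σ ν) * this

/-- delta sums -/
lemma sum_fT (σ ρ τ : Lb q) :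
    ∑ ν, (1 - chi ν τ) * chi σ ν * chi ν ρ
      = (if ρ = σ then 4 ^ q else 0) - (if ρ = xr σ τ then 4 ^ q else 0) := by
  have h : ∀ ν, (1 - chi ν τ) * chi σ ν * chi ν ρ
      = chi (xr ρ σ) ν - chi (xr ρ (xr σ τ)) ν := by
    intro ν
    rw [chi_xr, chi_xr, chi_xr, chi_comm ν ρ, chi_comm ν τ]; ring
  simp only [h, Finset.sum_sub_distrib, chi_sum, xr_eq_zero]

lemma sum_fS (σ ρ τ : Lb q) :
    ∑ ν, (1 + chi ν τ) * chi σ ν * chi ν ρ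
      = (if ρ = σ then 4 ^ q else 0) + (if ρ = xr σ τ then 4 ^ q else 0) := by
  have h : ∀ ν, (1 + chi ν τ) * chi σ ν * chi ν ρ
      = chi (xr ρ σ) ν + chi (xr ρ (xr σ τ)) ν := by
    intro ν
    rw [chi_xr, chi_xr, chi_xr, chi_comm ν ρ, chi_comm ν τ]; ring
  simp only [h, Finset.sum_add_distrib, chi_sum, xr_eq_zero]

lemma chi_xr_self (σ τ : Lb q) : chi (xr σ τ) τ = chi σ τ := by
  rw [chi_xr, chi_self, mul_one]

lemma S_KV (σ τ : Lb q) (h : chi σ τ = 1) :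
    MM fS (KV σ τ) = (2 * 4 ^ q * 4 ^ q : ℂ) • EV σ τ := by
  have h1 : MM fS (KV σ τ) = (4 ^ q : ℂ) • ∑ ρ, ((1 + chi ρ τ) *
      ((if ρ = σ then 4 ^ q else 0) - (if ρ = xr σ τ then 4 ^ q else 0))) • LV ρ τ := by
    rw [KV, map_sum]
    simp only [map_smul, MM_LV]
    simp only [← sum_fT, Finset.smul_sum, Finset.mul_sum, Finset.sum_smul, smul_smul]
    rw [Finset.sum_comm]
    refine Finset.sum_congr rfl fun ρ _ => Finset.sum_congr rfl fun ν _ => ?_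
    congr 1
    simp only [fT, fS]; ring
  rw [h1]
  simp only [mul_sub, sub_smul, Finset.sum_sub_distrib, mul_ite, mul_zero, ite_smul, zero_smul,
    Finset.sum_ite_eq', Finset.mem_univ, if_true]
  rw [chi_xr_self, h, EV_eq, h, one_smul, ← smul_sub, smul_smul]
  congr 1; ring

lemma KV_sum (ν τ : Lb q) (h : chi ν τ = -1) :
    ∑ σ, ((1 + chi σ τ) * chi σ ν) • KV σ τ = (2 * 4 ^ q : ℂ) • EV ν τ := by
  have h1 : ∑ σ, ((1 + chi σ τ) * chi σ ν) • KV σ τ = ∑ ρ, ((1 - chi ρ τ) *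
      ((if ρ = ν then 4 ^ q else 0) + (if ρ = xr ν τ then 4 ^ q else 0))) • LV ρ τ := by
    simp only [KV]
    simp only [← sum_fS, Finset.smul_sum, Finset.mul_sum, Finset.sum_smul, smul_smul]
    rw [Finset.sum_comm]
    refine Finset.sum_congr rfl fun ρ _ => Finset.sum_congr rfl fun σ _ => ?_
    congr 1
    simp only [fT]; rw [chi_comm ν σ]; ring
  rw [h1]
  simp only [mul_add, add_smul, Finset.sum_add_distrib, mul_ite, mul_zero, ite_smul, zero_smul,
    Finset.sum_ite_eq', Finset.mem_univ, if_true]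
  rw [chi_xr_self, h, EV_eq, h, neg_one_smul, ← smul_add, sub_neg_eq_add (LV ν τ)]
  congr 1; ring

lemma KV_self (τ : Lb q) : KV τ τ = - KV 0 τ := by
  rw [KV, KV, ← Finset.sum_neg_distrib]
  refine Finset.sum_congr rfl fun ν _ => ?_
  rw [← neg_smul]
  congr 1
  simp only [fT, chi_zero]
  rw [chi_comm τ ν]
  linear_combination - chi_sq ν τ

lemma sum_xr {M : Type*} [AddCommMonoid M] (τ : Lb q) (f : Lb q → M) :
    ∑ ν, f (xr ν τ) = ∑ ν, f ν :=
  Equiv.sum_comp (⟨fun ν => xr ν τ, fun ν => xr ν τ, fun ν => xr_xr ν τ, fun ν => xr_xr ν τ⟩ :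
    Lb q ≃ Lb q) f

lemma KV_EV (σ τ : Lb q) (h : chi σ τ = 1) :
    (2 : ℂ) • KV σ τ = ∑ ν, fT σ τ ν • EV ν τ := by
  have h2 : ∑ ν, fT σ τ ν • LV (xr ν τ) τ = KV σ τ := by
    rw [KV, ← sum_xr τ]
    refine Finset.sum_congr rfl fun ν _ => ?_
    congr 1
    · simp only [fT, chi_xr_self, chi_xr', h, mul_one]
    · rw [xr_xr]
  rw [two_smul]
  nth_rewrite 2 [← h2]
  rw [KV, ← Finset.sum_add_distrib]
  refine Finset.sum_congr rfl fun ν _ => ?_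
  rcases chi_pm ν τ with h3 | h3
  · simp [fT, h3]
  · rw [EV_eq, h3, neg_one_smul, sub_neg_eq_add, smul_add]

lemma hs_KV (σ τ σ' τ' : Lb q) (h0 : σ ≠ σ') (h1 : σ ≠ xr σ' τ) :
    hs (KV σ' τ') (KV σ τ) = 0 := by
  have e : hs (KV σ' τ') (KV σ τ)
      = ∑ ν, ∑ μ, fT σ τ ν * (star (fT σ' τ' μ) * hs (LV μ τ') (LV ν τ)) := by
    rw [← hsL_apply]
    conv_lhs => rw [KV.eq_def σ τ]
    rw [map_sum]
    refine Finset.sum_congr rfl fun ν _ => ?_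
    rw [map_smul, hsL_apply, hs_star, KV, ← hsL_apply, map_sum, star_sum, smul_eq_mul,
      Finset.mul_sum]
    refine Finset.sum_congr rfl fun μ _ => ?_
    rw [map_smul, hsL_apply, smul_eq_mul, star_mul', ← hs_star]
  rw [e]
  simp only [hs_LV]
  by_cases hτ : τ' = τ
  · subst hτ
    simp only [and_true, mul_ite, mul_zero, Finset.sum_ite_eq', Finset.mem_univ, if_true]
    have hstar : ∀ a b : Lb q, star (chi a b) = chi a b := by
      intro a b
      rcases chi_pm a b with h | h <;> simp [h]
    have : ∀ ν, fT σ τ' ν * (star (fT σ' τ' ν) * 4 ^ q)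
        = 2 * 4 ^ q * ((1 - chi ν τ') * chi σ' ν * chi ν σ) := by
      intro ν
      simp only [fT, star_mul', star_sub, star_one, hstar]
      rw [chi_comm ν σ]
      linear_combination (chi σ ν * chi σ' ν * 4 ^ q) * chi_sq ν τ'
    simp only [this, ← Finset.mul_sum, sum_fT, if_neg h0, if_neg h1]
    simp
  · simp [hτ]

/-! ### Translation -/

/-- normalized Pauli -/
def sP (a : Lb q) : Mat q := (sqrtd q)⁻¹ • PauliOp a

lemma sqrtd_ne : sqrtd q ≠ 0 := by
  unfold sqrtd
  have : (0 : ℝ) < Real.sqrt (2 ^ q) := Real.sqrt_pos.mpr (by positivity)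
  exact_mod_cast this.ne'

lemma sqrt2_ne : (Real.sqrt 2 : ℂ) ≠ 0 := by
  have : (0 : ℝ) < Real.sqrt 2 := Real.sqrt_pos.mpr (by positivity)
  exact_mod_cast this.ne'

lemma smul_inj_mat {c : ℂ} (hc : c ≠ 0) {x y : Mat q} (h : c • x = c • y) : x = y :=
  smul_right_injective (Mat q) hc h

lemma sP_inj : Function.Injective (sP : Lb q → Mat q) := fun a b h =>
  P_inj (smul_inj_mat (inv_ne_zero sqrtd_ne) h)

lemma sP_zero : sP (0 : Lb q) = sigma0 q := by rw [sP, P_zero, sigma0]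

lemma mem_sigmaSet (M : Mat q) : M ∈ sigmaSet q ↔ ∃ a : Lb q, a ≠ 0 ∧ M = sP a := by
  constructor
  · rintro ⟨⟨a, rfl⟩, h⟩
    refine ⟨a, ?_, rfl⟩
    rintro rfl
    exact h sP_zero
  · rintro ⟨a, ha, rfl⟩
    refine ⟨⟨a, rfl⟩, ?_⟩
    intro h
    rw [Set.mem_singleton_iff, ← sP_zero] at h
    exact ha (sP_inj h)

lemma sP_mul (a b : Lb q) : sP a * sP b = ((sqrtd q)⁻¹ * (sqrtd q)⁻¹) • (PauliOp a * PauliOp b) := by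
  rw [sP, sP, Matrix.smul_mul, Matrix.mul_smul, smul_smul]

lemma sd2_ne : ((sqrtd q)⁻¹ * (sqrtd q)⁻¹) ≠ 0 :=
  mul_ne_zero (inv_ne_zero sqrtd_ne) (inv_ne_zero sqrtd_ne)

lemma PP_ne (a b : Lb q) : PauliOp a * PauliOp b ≠ 0 := by
  rw [P_mul]
  exact smul_ne_zero (om_ne _ _) (P_ne _)

lemma sP_comm_iff (a b : Lb q) : sP a * sP b = sP b * sP a ↔ chi a b = 1 := by
  rw [sP_mul, sP_mul, P_comm a b]
  constructor
  · intro h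
    have h := smul_inj_mat sd2_ne h
    rcases chi_pm a b with h1 | h1
    · exact h1
    · exfalso
      rw [h1, P_mul b a, smul_comm] at h
      have h := smul_inj_mat (om_ne _ _) h
      rw [neg_one_smul] at h
      exact P_neg_ne _ _ h.symm
  · intro h; rw [h, one_smul]

lemma sP_anti_iff (a b : Lb q) : sP a * sP b + sP b * sP a = 0 ↔ chi a b = -1 := by
  rw [sP_mul, sP_mul, P_comm a b, ← smul_add]
  constructor
  · intro h
    have h := (smul_eq_zero.1 h).resolve_left sd2_ne
    rcases chi_pm a b with h1 | h1
    · exfalso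
      rw [h1, one_smul, P_mul b a, ← smul_add] at h
      have h := (smul_eq_zero.1 h).resolve_left (om_ne _ _)
      exact P_neg_ne _ _ (eq_neg_of_add_eq_zero_left h)
    · exact h1
  · intro h; rw [h, neg_one_smul, neg_add_cancel, smul_zero]

lemma chi_zero' (a : Lb q) : chi a 0 = 1 := by rw [chi_comm, chi_zero]

lemma neg_one_ne : (1 : ℂ) ≠ -1 := by norm_num

lemma ne_zero_left {a b : Lb q} (h : chi a b = -1) : a ≠ 0 := by
  rintro rfl
  rw [chi_zero] at h
  exact neg_one_ne h

lemma ne_zero_right {a b : Lb q} (h : chi a b = -1) : b ≠ 0 := by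
  rintro rfl
  rw [chi_zero'] at h
  exact neg_one_ne h

lemma mem_NSet (τ : Lb q) (M : Mat q) : M ∈ NSet (sP τ) ↔ ∃ a, chi a τ = -1 ∧ M = sP a := by
  constructor
  · rintro ⟨h1, h2⟩
    obtain ⟨a, ha, rfl⟩ := (mem_sigmaSet _).1 h1
    exact ⟨a, (sP_anti_iff _ _).1 h2, rfl⟩
  · rintro ⟨a, ha, rfl⟩
    exact ⟨(mem_sigmaSet _).2 ⟨a, ne_zero_left ha, rfl⟩, (sP_anti_iff _ _).2 ha⟩

lemma mem_CSet (τ : Lb q) (M : Mat q) :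
    M ∈ CSet (sP τ) ↔ ∃ a, a ≠ 0 ∧ a ≠ τ ∧ chi a τ = 1 ∧ M = sP a := by
  constructor
  · rintro ⟨h1, h2, h3⟩
    obtain ⟨a, ha, rfl⟩ := (mem_sigmaSet _).1 h1
    exact ⟨a, ha, fun h => h2 (by rw [h]), (sP_comm_iff _ _).1 h3, rfl⟩
  · rintro ⟨a, ha, hb, hc, rfl⟩
    exact ⟨(mem_sigmaSet _).2 ⟨a, ha, rfl⟩, fun h => hb (sP_inj h), (sP_comm_iff _ _).2 hc⟩

lemma sub_kron (A B : Mat q) (c : ℂ) :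
    AVec A (c • B) = c • AVec A B := by
  unfold AVec
  rw [Matrix.kronecker_smul, Matrix.smul_kronecker, ← smul_sub, smul_comm]

/-- constant -/
def kap (q : ℕ) : ℂ := (Real.sqrt 2 : ℂ)⁻¹ * ((sqrtd q)⁻¹ * (sqrtd q)⁻¹)

lemma kap_ne : kap q ≠ 0 := mul_ne_zero (inv_ne_zero sqrt2_ne) sd2_ne

lemma AVec_nprod (σ τ : Lb q) : AVec (sP σ) (nprod (sP σ) (sP τ)) = kap q • EV σ τ := by
  have : nprod (sP σ) (sP τ) = (sqrtd q)⁻¹ • (PauliOp σ * PauliOp τ) := by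
    rw [nprod, sP_mul, smul_smul, ← mul_assoc, mul_inv_cancel₀ sqrtd_ne, one_mul]
  rw [this, AVec, EV, sP, Matrix.kronecker_smul, Matrix.smul_kronecker, Matrix.smul_kronecker,
    Matrix.kronecker_smul, smul_smul, smul_smul, ← smul_sub, smul_smul, kap]

lemma EV_AVec (a b : Lb q) : kap q • EV a b = om a b • AVec (sP a) (sP (xr a b)) := by
  rw [AVec, EV, sP, sP, P_mul]
  simp only [Matrix.kronecker_smul, Matrix.smul_kronecker, ← smul_sub, smul_smul, kap]
  congr 1; ring

lemma VAcom'_eq : VAcom' q = Submodule.span ℂ {M | ∃ σ τ : Lb q, τ ≠ 0 ∧ σ ≠ 0 ∧ σ ≠ τ ∧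
    chi σ τ = 1 ∧ M = EV σ τ} := by
  apply le_antisymm
  · refine Submodule.span_le.2 ?_
    rintro _ ⟨t, ht, s, hs, rfl⟩
    obtain ⟨τ, hτ, rfl⟩ := (mem_sigmaSet _).1 ht
    obtain ⟨σ, h1, h2, h3, rfl⟩ := (mem_CSet _ _).1 hs
    rw [AVec_nprod]
    exact Submodule.smul_mem _ _ (Submodule.subset_span ⟨σ, τ, hτ, h1, h2, h3, rfl⟩)
  · refine Submodule.span_le.2 ?_
    rintro _ ⟨σ, τ, hτ, h1, h2, h3, rfl⟩
    rw [SetLike.mem_coe, ← Submodule.smul_mem_iff _ (kap_ne (q := q)), ← AVec_nprod]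
    exact Submodule.subset_span ⟨_, (mem_sigmaSet _).2 ⟨τ, hτ, rfl⟩, _,
      (mem_CSet _ _).2 ⟨σ, h1, h2, h3, rfl⟩, rfl⟩

lemma VAanti_eq : VAanti q = Submodule.span ℂ {M | ∃ σ τ : Lb q, chi σ τ = -1 ∧ M = EV σ τ} := by
  apply le_antisymm
  · refine Submodule.span_le.2 ?_
    rintro _ ⟨t, ht, s, hs, rfl⟩
    obtain ⟨τ, hτ, rfl⟩ := (mem_sigmaSet _).1 ht
    obtain ⟨σ, h3, rfl⟩ := (mem_NSet _ _).1 hs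
    have h := EV_AVec σ (xr τ σ)
    rw [xr_comm σ, xr_xr] at h
    rw [SetLike.mem_coe, ← Submodule.smul_mem_iff _ (om_ne σ (xr τ σ)), ← h]
    refine Submodule.smul_mem _ _ (Submodule.subset_span ⟨σ, xr τ σ, ?_, rfl⟩)
    rw [chi_xr', chi_self, mul_one, h3]
  · refine Submodule.span_le.2 ?_
    rintro _ ⟨σ, τ, h3, rfl⟩
    have h4 : chi σ (xr σ τ) = -1 := by rw [chi_xr', chi_self, one_mul, h3]
    rw [SetLike.mem_coe, ← Submodule.smul_mem_iff _ (kap_ne (q := q)), EV_AVec]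
    exact Submodule.smul_mem _ _ (Submodule.subset_span
      ⟨_, (mem_sigmaSet _).2 ⟨xr σ τ, ne_zero_right h4, rfl⟩, _,
      (mem_NSet _ _).2 ⟨σ, h4, rfl⟩, rfl⟩)

lemma KV_mem_VAanti (σ τ : Lb q) (h : chi σ τ = 1) : KV σ τ ∈ VAanti q := by
  rw [← Submodule.smul_mem_iff _ (two_ne_zero (α := ℂ)), KV_EV _ _ h]
  refine Submodule.sum_mem _ fun ν _ => ?_
  rcases chi_pm ν τ with h1 | h1
  · simp [fT, h1]
  · rw [VAanti_eq]
    exact Submodule.smul_mem _ _ (Submodule.subset_span ⟨ν, τ, h1, rfl⟩)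

lemma finsum_NSet (τ : Lb q) :
    ∑ᶠ σ ∈ NSet (sP τ), AVec σ (Complex.I • nprod σ (sP τ)) = (Complex.I * kap q) • KV 0 τ := by
  classical
  have h1 : NSet (sP τ) = sP '' ((Finset.univ.filter fun a => chi a τ = -1 : Finset (Lb q)) : Set (Lb q)) := by
    ext M
    rw [mem_NSet]
    simp only [Finset.coe_filter, Finset.mem_univ, true_and, Set.mem_image, Set.mem_ofPred_eq]
    exact exists_congr fun a => and_congr_right fun _ => eq_comm
  rw [h1, finsum_mem_image sP_inj.injOn, finsum_mem_coe_finset]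
  simp only [sub_kron, AVec_nprod, smul_smul]
  rw [← Finset.smul_sum]
  congr 1
  apply smul_right_injective (BMat q) (two_ne_zero (α := ℂ))
  dsimp only
  rw [KV_EV _ _ (chi_zero τ), Finset.smul_sum, Finset.sum_filter]
  refine Finset.sum_congr rfl fun ν _ => ?_
  rw [fT, chi_zero]
  rcases chi_pm ν τ with h | h
  · rw [if_neg (by rw [h]; exact neg_one_ne), h]; simp
  · rw [if_pos h, h]; norm_num

lemma VadjA_eq : VadjA q = Submodule.span ℂ {M | ∃ τ : Lb q, τ ≠ 0 ∧ M = KV 0 τ} := by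
  apply le_antisymm
  · refine Submodule.span_le.2 ?_
    rintro _ ⟨t, ht, rfl⟩
    obtain ⟨τ, hτ, rfl⟩ := (mem_sigmaSet _).1 ht
    rw [vadjA, finsum_NSet]
    exact Submodule.smul_mem _ _ (Submodule.smul_mem _ _ (Submodule.subset_span ⟨τ, hτ, rfl⟩))
  · refine Submodule.span_le.2 ?_
    rintro _ ⟨τ, hτ, rfl⟩
    have hI : Complex.I * kap q ≠ 0 := mul_ne_zero Complex.I_ne_zero kap_ne
    have hfin : (NSet (sP τ)).Finite := by
      refine (Set.finite_range (sP : Lb q → Mat q)).subset ?_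
      intro M hM
      obtain ⟨a, _, rfl⟩ := (mem_NSet _ _).1 hM
      exact ⟨a, rfl⟩
    rcases Nat.eq_zero_or_pos (NSet (sP τ)).ncard with h | h
    · have h := (Set.ncard_eq_zero hfin).1 h
      have h2 := finsum_NSet τ
      rw [h] at h2
      simp only [Set.mem_empty_iff_false, finsum_false, finsum_zero] at h2
      rw [(smul_eq_zero.1 h2.symm).resolve_left hI]
      exact Submodule.zero_mem _
    · have hc : ((Real.sqrt (2 * ((NSet (sP τ)).ncard : ℝ)) : ℂ))⁻¹ ≠ 0 := by
        apply inv_ne_zero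
        have : (0 : ℝ) < Real.sqrt (2 * ((NSet (sP τ)).ncard : ℝ)) :=
          Real.sqrt_pos.mpr (by positivity)
        exact_mod_cast this.ne'
      rw [SetLike.mem_coe, ← Submodule.smul_mem_iff _ hI, ← Submodule.smul_mem_iff _ hc,
        ← finsum_NSet]
      exact Submodule.subset_span ⟨_, (mem_sigmaSet _).2 ⟨τ, hτ, rfl⟩, rfl⟩

/-! ### Clifford action -/

lemma cliff_data (U : Mat q) (hU : U ∈ Cliff q) : ∃ (π : Lb q ≃ Lb q) (t : Lb q → ℂ),
    (∀ a, t a = 1 ∨ t a = -1) ∧ (∀ a, U * PauliOp a * Uᴴ = t a • PauliOp (π a)) := by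
  obtain ⟨hu, hc⟩ := hU
  have key : ∀ a : Lb q, ∃ b : Lb q, ∃ t : ℂ, (t = 1 ∨ t = -1) ∧
      U * PauliOp a * Uᴴ = t • PauliOp b := by
    intro a
    obtain ⟨_, ⟨b, rfl⟩, h⟩ := hc _ ⟨a, rfl⟩
    rw [Matrix.mul_smul, Matrix.smul_mul] at h
    rcases h with h | h
    · exact ⟨b, 1, Or.inl rfl, by rw [one_smul]; exact smul_inj_mat (inv_ne_zero sqrtd_ne) h⟩
    · refine ⟨b, -1, Or.inr rfl, ?_⟩
      rw [neg_one_smul]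
      rw [← smul_neg] at h
      exact smul_inj_mat (inv_ne_zero sqrtd_ne) h
  choose π t ht hπ using key
  have hUU : Uᴴ * U = 1 := (Matrix.mem_unitaryGroup_iff'.1 hu)
  have hback : ∀ a, PauliOp a = t a • (Uᴴ * PauliOp (π a) * U) := by
    intro a
    have : Uᴴ * (U * PauliOp a * Uᴴ) * U = PauliOp a := by
      calc Uᴴ * (U * PauliOp a * Uᴴ) * U = (Uᴴ * U) * PauliOp a * (Uᴴ * U) := by
            simp only [mul_assoc]
        _ = PauliOp a := by rw [hUU, one_mul, mul_one]
    rw [← this, hπ, Matrix.mul_smul, Matrix.smul_mul]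
  have hinj : Function.Injective π := by
    intro a b hab
    have h1 := hback a
    have h2 := hback b
    rw [← hab] at h2
    rcases ht a with ha | ha <;> rcases ht b with hb | hb <;> rw [ha] at h1 <;> rw [hb] at h2 <;>
      simp only [one_smul, neg_one_smul] at h1 h2
    · exact P_inj (h1.trans h2.symm)
    · exact absurd (by rw [h2, h1, neg_neg]) (P_neg_ne a b)
    · exact absurd (by rw [h2, h1]) (P_neg_ne a b)
    · exact P_inj (h1.trans h2.symm)
  exact ⟨Equiv.ofBijective π (Finite.injective_iff_bijective.1 hinj), t, ht, hπ⟩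

lemma twoCopy_kron (U A B : Mat q) :
    twoCopy U (A ⊗ₖ B) = (U * A * Uᴴ) ⊗ₖ (U * B * Uᴴ) := by
  show (U ⊗ₖ U) * (A ⊗ₖ B) * (U ⊗ₖ U)ᴴ = _
  rw [Matrix.conjTranspose_kronecker, ← Matrix.mul_kronecker_mul, ← Matrix.mul_kronecker_mul]

lemma hs_twoCopy (U : Mat q) (hu : Uᴴ * U = 1) (v w : BMat q) :
    hs (twoCopy U v) (twoCopy U w) = hs v w := by
  have h1 : (U ⊗ₖ U)ᴴ * (U ⊗ₖ U) = 1 := by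
    rw [Matrix.conjTranspose_kronecker, ← Matrix.mul_kronecker_mul, hu, Matrix.one_kronecker_one]
  unfold hs
  show (((U ⊗ₖ U) * v * (U ⊗ₖ U)ᴴ)ᴴ * ((U ⊗ₖ U) * w * (U ⊗ₖ U)ᴴ)).trace = _
  generalize U ⊗ₖ U = W at h1
  rw [Matrix.conjTranspose_mul, Matrix.conjTranspose_mul, Matrix.conjTranspose_conjTranspose]
  have : W * (vᴴ * Wᴴ) * (W * w * Wᴴ) = W * (vᴴ * w * Wᴴ) := by
    calc W * (vᴴ * Wᴴ) * (W * w * Wᴴ) = W * (vᴴ * (Wᴴ * W) * w * Wᴴ) := by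
          simp only [mul_assoc]
      _ = _ := by rw [h1, mul_one]
  rw [this, Matrix.trace_mul_comm, mul_assoc, h1, mul_one]

section cl

variable {U : Mat q} {π : Lb q ≃ Lb q} {t : Lb q → ℂ}

lemma conj_mul (hu : Uᴴ * U = 1) (A B : Mat q) :
    U * (A * B) * Uᴴ = (U * A * Uᴴ) * (U * B * Uᴴ) := by
  calc U * (A * B) * Uᴴ = U * A * 1 * B * Uᴴ := by simp only [mul_assoc, one_mul, mul_one]
    _ = _ := by rw [← hu]; simp only [mul_assoc]

lemma conj_PP (hu : Uᴴ * U = 1) (hπ : ∀ a, U * PauliOp a * Uᴴ = t a • PauliOp (π a))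
    (a b : Lb q) :
    U * (PauliOp a * PauliOp b) * Uᴴ = (t a * t b) • (PauliOp (π a) * PauliOp (π b)) := by
  rw [conj_mul hu, hπ, hπ, Matrix.smul_mul, Matrix.mul_smul, smul_smul]

lemma t_sq (ht : ∀ a, t a = 1 ∨ t a = -1) (a : Lb q) : t a * t a = 1 := by
  rcases ht a with h | h <;> simp [h]

lemma t_ne (ht : ∀ a, t a = 1 ∨ t a = -1) (a : Lb q) : t a ≠ 0 := by
  rcases ht a with h | h <;> simp [h]

lemma chi_pi (hu : Uᴴ * U = 1) (ht : ∀ a, t a = 1 ∨ t a = -1)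
    (hπ : ∀ a, U * PauliOp a * Uᴴ = t a • PauliOp (π a)) (a b : Lb q) :
    chi (π a) (π b) = chi a b := by
  have h1 := conj_PP hu hπ a b
  rw [P_comm a b, Matrix.mul_smul, Matrix.smul_mul, conj_PP hu hπ b a, P_comm (π a) (π b),
    mul_comm (t b), smul_comm] at h1
  have h2 := smul_inj_mat (mul_ne_zero (t_ne ht a) (t_ne ht b)) h1
  by_contra hne
  have h3 : (chi a b - chi (π a) (π b)) • (PauliOp (π b) * PauliOp (π a)) = 0 := by
    rw [sub_smul, h2, sub_self]
  rcases smul_eq_zero.1 h3 with h | h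
  · exact hne (sub_eq_zero.1 h).symm
  · exact PP_ne _ _ h

lemma pi_zero (hu : Uᴴ * U = 1) (ht : ∀ a, t a = 1 ∨ t a = -1)
    (hπ : ∀ a, U * PauliOp a * Uᴴ = t a • PauliOp (π a)) : π 0 = 0 := by
  have h := hπ 0
  rw [P_zero, mul_one, mul_eq_one_comm.1 hu, ← P_zero] at h
  rcases ht 0 with h0 | h0
  · rw [h0, one_smul] at h
    exact (P_inj h).symm
  · rw [h0, neg_one_smul] at h
    exact absurd h (P_neg_ne _ _)

lemma twoCopy_LV (hu : Uᴴ * U = 1) (ht : ∀ a, t a = 1 ∨ t a = -1)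
    (hπ : ∀ a, U * PauliOp a * Uᴴ = t a • PauliOp (π a)) (σ τ : Lb q) :
    twoCopy U (LV σ τ) = t τ • LV (π σ) (π τ) := by
  rw [LV, twoCopy_kron, hπ, conj_PP hu hπ, Matrix.smul_kronecker, Matrix.kronecker_smul,
    smul_smul, ← mul_assoc, t_sq ht, one_mul, LV]

lemma twoCopy_EV (hu : Uᴴ * U = 1) (ht : ∀ a, t a = 1 ∨ t a = -1)
    (hπ : ∀ a, U * PauliOp a * Uᴴ = t a • PauliOp (π a)) (σ τ : Lb q) :
    twoCopy U (EV σ τ) = t τ • EV (π σ) (π τ) := by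
  rw [EV, map_sub, twoCopy_kron, twoCopy_kron, hπ, conj_PP hu hπ, EV]
  simp only [Matrix.smul_kronecker, Matrix.kronecker_smul, smul_smul]
  have e1 : t σ * (t σ * t τ) = t τ := by rw [← mul_assoc, t_sq ht, one_mul]
  have e2 : t σ * t τ * t σ = t τ := by rw [mul_comm, e1]
  simp only [e1, e2, smul_sub]

lemma MM_twoCopy (hu : Uᴴ * U = 1) (ht : ∀ a, t a = 1 ∨ t a = -1)
    (hπ : ∀ a, U * PauliOp a * Uᴴ = t a • PauliOp (π a)) (M : BMat q) :
    MM fT (twoCopy U M) = twoCopy U (MM fT M) := by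
  rw [MM_apply, MM_apply, map_sum, ← Equiv.sum_comp π]
  refine Finset.sum_congr rfl fun σ _ => ?_
  rw [map_sum, ← Equiv.sum_comp π]
  refine Finset.sum_congr rfl fun τ _ => ?_
  rw [map_smul, map_sum, ← Equiv.sum_comp π]
  have h1 : LV (π σ) (π τ) = t τ • twoCopy U (LV σ τ) := by
    rw [twoCopy_LV hu ht hπ, smul_smul, t_sq ht, one_smul]
  have h2 : hs (LV (π σ) (π τ)) (twoCopy U M) = t τ * hs (LV σ τ) M := by
    rw [h1, hs_star, ← hsL_apply, map_smul, hsL_apply, smul_eq_mul, star_mul', ← hs_star,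
      hs_twoCopy U hu]
    rcases ht τ with h | h <;> simp [h]
  rw [h2, mul_comm, mul_smul, Finset.smul_sum]
  congr 1
  refine Finset.sum_congr rfl fun ν _ => ?_
  rw [map_smul, twoCopy_LV hu ht hπ, smul_comm]
  simp only [fT, chi_pi hu ht hπ]

end cl

lemma VAcom'_inv : IsInvariant q (VAcom' q) := by
  intro U hU v hv
  obtain ⟨π, t, ht, hπ⟩ := cliff_data U hU
  have hu : Uᴴ * U = 1 := Matrix.mem_unitaryGroup_iff'.1 hU.1
  suffices h : VAcom' q ≤ (VAcom' q).comap (twoCopy U) from h hv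
  conv_lhs => rw [VAcom'_eq]
  refine Submodule.span_le.2 ?_
  rintro _ ⟨σ, τ, h1, h2, h3, h4, rfl⟩
  rw [SetLike.mem_coe, Submodule.mem_comap, twoCopy_EV hu ht hπ, VAcom'_eq]
  have h0 := pi_zero hu ht hπ
  refine Submodule.smul_mem _ _ (Submodule.subset_span ⟨π σ, π τ, ?_, ?_, ?_, ?_, rfl⟩)
  · intro h; rw [← h0] at h; exact h1 (π.injective h)
  · intro h; rw [← h0] at h; exact h2 (π.injective h)
  · intro h; exact h3 (π.injective h)
  · rw [chi_pi hu ht hπ, h4]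

lemma MM_equiv (U : Mat q) (hU : U ∈ Cliff q) (x : BMat q) :
    MM fT (twoCopy U x) = twoCopy U (MM fT x) := by
  obtain ⟨π, t, ht, hπ⟩ := cliff_data U hU
  exact MM_twoCopy (Matrix.mem_unitaryGroup_iff'.1 hU.1) ht hπ x

lemma hs_VadjA_zero (v : BMat q) (h : ∀ τ : Lb q, τ ≠ 0 → hs (KV 0 τ) v = 0) (w : BMat q)
    (hw : w ∈ VadjA q) : hs w v = 0 := by
  suffices h2 : VadjA q ≤ LinearMap.ker (hsL v) by
    have := h2 hw
    rw [LinearMap.mem_ker, hsL_apply] at this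
    rw [hs_star, this, star_zero]
  rw [VadjA_eq]
  refine Submodule.span_le.2 ?_
  rintro _ ⟨τ, hτ, rfl⟩
  rw [SetLike.mem_coe, LinearMap.mem_ker, hsL_apply, hs_star, h τ hτ, star_zero]

lemma four_ne : (2 * 4 ^ q : ℂ) ≠ 0 := by simp

lemma zero_xr (τ : Lb q) : xr 0 τ = τ := by
  exact (xr_eq_zero _ _).1 (xr_xr (0 : Lb q) τ)

lemma map_eq : Submodule.map (MM fT) (VAcom' q) = VadjAperp q := by
  have hperp : ∀ x ∈ VadjAperp q, ∀ w ∈ VadjA q, hs w x = 0 := by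
    intro x hx w hw
    suffices h : VadjAperp q ≤ LinearMap.ker (hsL w) from h hx
    exact Submodule.span_le.2 fun v hv => hv.2 w hw
  have hle : Submodule.map (MM fT) (VAcom' q) ≤ VadjAperp q := by
    rw [VAcom'_eq, Submodule.map_span, Submodule.span_le]
    rintro _ ⟨_, ⟨σ, τ, h1, h2, h3, h4, rfl⟩, rfl⟩
    rw [T_EV _ _ h4]
    refine Submodule.smul_mem _ _ (Submodule.subset_span ⟨KV_mem_VAanti _ _ h4, ?_⟩)
    refine hs_VadjA_zero _ fun τ' _ => hs_KV _ _ _ _ h2 ?_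
    rw [zero_xr]; exact h3
  refine le_antisymm hle ?_
  have hsup : VAanti q ≤ Submodule.map (MM fT) (VAcom' q) ⊔ VadjA q := by
    rw [VAanti_eq]
    refine Submodule.span_le.2 ?_
    rintro _ ⟨ν, τ, h, rfl⟩
    have hτ := ne_zero_right h
    have hK0 : KV 0 τ ∈ VadjA q := by
      rw [VadjA_eq]; exact Submodule.subset_span ⟨τ, hτ, rfl⟩
    rw [SetLike.mem_coe, ← Submodule.smul_mem_iff _ (four_ne (q := q)), ← KV_sum _ _ h]
    refine Submodule.sum_mem _ fun σ _ => ?_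
    rcases chi_pm σ τ with h1 | h1
    · refine Submodule.smul_mem _ _ ?_
      by_cases hs0 : σ = 0
      · rw [hs0]; exact Submodule.mem_sup_right hK0
      by_cases hsτ : σ = τ
      · rw [hsτ, KV_self]; exact Submodule.mem_sup_right (Submodule.neg_mem _ hK0)
      refine Submodule.mem_sup_left ?_
      rw [← Submodule.smul_mem_iff _ (four_ne (q := q)), ← T_EV _ _ h1]
      refine Submodule.mem_map_of_mem ?_
      rw [VAcom'_eq]
      exact Submodule.subset_span ⟨σ, τ, hτ, hs0, hsτ, h1, rfl⟩
    · rw [h1]; simp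
  refine Submodule.span_le.2 ?_
  rintro v ⟨hv1, hv2⟩
  obtain ⟨x, hx, w, hw, rfl⟩ := Submodule.mem_sup.1 (hsup hv1)
  have h1 := hv2 w hw
  rw [← hsL_apply, map_add, hsL_apply, hsL_apply, hperp x (hle hx) w hw, zero_add] at h1
  have hw0 : w = 0 := by
    open scoped ComplexOrder in
    exact Matrix.trace_conjTranspose_mul_self_eq_zero_iff.1 h1
  rw [hw0, add_zero]
  exact hx

lemma MM_inj (x : BMat q) (hx : x ∈ VAcom' q) (h : MM fT x = 0) : x = 0 := by
  have key : MM fS (MM fT x) = ((2 * 4 ^ q) * (2 * 4 ^ q * 4 ^ q) : ℂ) • x := by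
    suffices h2 : VAcom' q ≤ LinearMap.ker ((MM fS).comp (MM fT) -
        ((2 * 4 ^ q) * (2 * 4 ^ q * 4 ^ q) : ℂ) • LinearMap.id) by
      have := h2 hx
      rw [LinearMap.mem_ker] at this
      simpa [sub_eq_zero] using this
    rw [VAcom'_eq]
    refine Submodule.span_le.2 ?_
    rintro _ ⟨σ, τ, h1, h2, h3, h4, rfl⟩
    rw [SetLike.mem_coe, LinearMap.mem_ker, LinearMap.sub_apply, LinearMap.comp_apply,
      LinearMap.smul_apply, LinearMap.id_apply, T_EV _ _ h4, map_smul, S_KV _ _ h4, smul_smul,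
      sub_self]
  rw [h, map_zero] at key
  exact (smul_eq_zero.1 key.symm).resolve_left (by simp)

end aux

/-- `V^⊥_{adj}` is invariant and `V_[A]`, `V^⊥_{adj}` carry
equivalent subrepresentations. -/
theorem statement11 (q : ℕ) (hq : 2 ≤ q) :
    IsInvariant q (VadjAperp q) ∧ EquivRep q (VAcom' q) (VadjAperp q) := by
  refine ⟨?_, MM fT, map_eq, MM_inj, fun U hU x _ => MM_equiv U hU x⟩
  intro U hU v hv
  rw [← map_eq] at hv ⊢
  obtain ⟨x, hx, rfl⟩ := hv
  rw [← MM_equiv U hU]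
  exact Submodule.mem_map_of_mem (VAcom'_inv U hU x hx)

end CliffordPaper
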